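/- arXiv:math/0606451 — 3 statements merged into one kernel-verified Lean document; each statement's English description precedes it below -/
import Mathlib

section
/- Let k, ℓ ≥ 1 and let a₁, …, a_k, b₁, …, b_ℓ be positive integers with a₁ + ⋯ + a_k ≥ b₁ + ⋯ + b_ℓ ≥ 2. Set Q = a₁ + ⋯ + a_k and S = b₁ + ⋯ + b_ℓ. Then the least positive integer N such that every 2-coloring χ of {1,…,N} admits either values x, y₁, …, y_k, z ∈ {1,…,N} with x + a₁y₁ + ⋯ + a_ky_k = z all colored 0, or values x, y₁, …, y_ℓ, z ∈ {1,…,N} with x + b₁y₁ + ⋯ + b_ℓy_ℓ = z all colored 1, is N = (Q+1)(S+1) + S. -/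
/-!
Write `Q = ∑ aᵢ`, `S = ∑ bᵢ` and `N = (Q + 1)(S + 1) + S`.

Upper bound: taking all `yᵢ` equal reduces the two equations to `x + Qy = z` and `x + Sy = z`.
Starting from the color of `1`, these force the colors of a short list of numbers up to `N`,
ending in a contradiction for either choice.

Lower bound: color `[S + 1, (Q + 1)(S + 1))` with `0` and everything else with `1`. In color `0` the
sum `x + ∑ aᵢyᵢ` overshoots the interval. In color `1`, a variable from the upper block
`[(Q + 1)(S + 1), N)` pushes `z` to `N` or beyond, while variables from `[1, S]` alone land `z` in
the interval of color `0`.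
-/

open Set

/-- The set `A` contains no solution of `x + q * y = z`. -/
def AddMulFree (q : ℕ) (A : Set ℕ) : Prop :=
  ∀ ⦃x y z⦄, x ∈ A → y ∈ A → z ∈ A → x + q * y ≠ z

/-- The set `A` contains no solution of `x + ∑ i, a i * y i = z`. -/
def AddSumMulFree {ι : Type*} [Fintype ι] (a : ι → ℕ) (A : Set ℕ) : Prop :=
  ∀ ⦃x : ℕ⦄ ⦃y : ι → ℕ⦄ ⦃z : ℕ⦄, x ∈ A → (∀ i, y i ∈ A) → z ∈ A → x + ∑ i, a i * y i ≠ z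

/-- The elements of `{1, …, N}` that `χ` colors with `c`. Colorings are defined on all of `ℕ`, but
only their values on `{1, …, N}` enter. -/
def colorClass {α : Type*} (χ : ℕ → α) (N : ℕ) (c : α) : Set ℕ :=
  {n | n ∈ Finset.Icc 1 N ∧ χ n = c}

section Forcing

variable {Q S : ℕ} {A B : Set ℕ}

theorem one_notMem_left_of_Icc_subset_union (hS : 0 < S) (hSQ : S ≤ Q)
    (hA : AddMulFree Q A) (hB : AddMulFree S B)
    (hcover : Icc 1 ((Q + 1) * (S + 1) + S) ⊆ A ∪ B) : 1 ∉ A := by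
  intro one_mem
  have mem_or {n : ℕ} (hn : 1 ≤ n) (hnN : n ≤ (Q + 1) * (S + 1) + S) : n ∈ A ∨ n ∈ B :=
    hcover ⟨hn, hnN⟩
  have Q1_mem : Q + 1 ∈ B :=
    (mem_or (by lia) (by nlinarith)).resolve_left fun h ↦ hA one_mem one_mem h (by ring)
  have Q1S1_mem : (Q + 1) * (S + 1) ∈ A :=
    (mem_or (by nlinarith) (by lia)).resolve_right fun h ↦ hB Q1_mem Q1_mem h (by ring)
  have S1_mem : S + 1 ∈ B :=
    (mem_or (by lia) (by nlinarith)).resolve_left fun h ↦ hA h h Q1S1_mem (by ring)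
  have QS_twoS1_mem : Q * S + 2 * S + 1 ∈ A :=
    (mem_or (by lia) (by nlinarith)).resolve_right fun h ↦ hB S1_mem Q1_mem h (by ring)
  have N_mem : (Q + 1) * (S + 1) + S ∈ B :=
    (mem_or (by nlinarith) le_rfl).resolve_left fun h ↦ hA QS_twoS1_mem one_mem h (by ring)
  have SQ1_mem : S + Q + 1 ∈ A :=
    (mem_or (by lia) (by nlinarith)).resolve_right fun h ↦ hB h Q1_mem N_mem (by ring)
  have S_mem : S ∈ B :=
    (mem_or hS (by nlinarith)).resolve_left fun h ↦ hA SQ1_mem h Q1S1_mem (by ring)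
  have SS_S1_mem : S * S + S + 1 ∈ A :=
    (mem_or (by lia) (by nlinarith)).resolve_right fun h ↦ hB S1_mem S_mem h (by ring)
  have SS_SQ1_mem : S * S + S + Q + 1 ∈ A :=
    (mem_or (by lia) (by nlinarith)).resolve_right fun h ↦ hB Q1_mem S1_mem h (by ring)
  exact hA SS_S1_mem one_mem SS_SQ1_mem (by ring)

theorem one_notMem_right_of_Icc_subset_union (hS : 2 ≤ S) (hSQ : S ≤ Q)
    (hA : AddMulFree Q A) (hB : AddMulFree S B)
    (hcover : Icc 1 ((Q + 1) * (S + 1) + S) ⊆ A ∪ B) : 1 ∉ B := by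
  intro one_mem
  have mem_or {n : ℕ} (hn : 1 ≤ n) (hnN : n ≤ (Q + 1) * (S + 1) + S) : n ∈ A ∨ n ∈ B :=
    hcover ⟨hn, hnN⟩
  obtain ⟨t, hSt⟩ : ∃ t, S = t + 1 := Nat.exists_eq_add_of_le' (by lia)
  have S1_mem : S + 1 ∈ A :=
    (mem_or (by lia) (by nlinarith)).resolve_right fun h ↦ hB one_mem one_mem h (by ring)
  have Q1S1_mem : (Q + 1) * (S + 1) ∈ B :=
    (mem_or (by nlinarith) (by lia)).resolve_left fun h ↦ hA S1_mem S1_mem h (by ring)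
  have N_mem : (Q + 1) * (S + 1) + S ∈ A :=
    (mem_or (by nlinarith) le_rfl).resolve_right fun h ↦ hB Q1S1_mem one_mem h (by ring)
  have twoS1_mem : 2 * S + 1 ∈ B :=
    (mem_or (by lia) (by nlinarith)).resolve_left fun h ↦ hA h S1_mem N_mem (by ring)
  have two_mem : 2 ∈ A :=
    (mem_or (by lia) (by nlinarith)).resolve_right fun h ↦ hB one_mem h twoS1_mem (by ring)
  have S1_twoQ_mem : S + 1 + 2 * Q ∈ B :=
    (mem_or (by lia) (by nlinarith)).resolve_left fun h ↦ hA S1_mem two_mem h (by ring)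
  have twoQ1_mem : 2 * Q + 1 ∈ A :=
    (mem_or (by lia) (by nlinarith)).resolve_right fun h ↦ hB h one_mem S1_twoQ_mem (by ring)
  have Q1_mem : Q + 1 ∈ A :=
    (mem_or (by lia) (by nlinarith)).resolve_right fun h ↦ hB h h Q1S1_mem (by ring)
  have QS_Q1_mem : Q * S + Q + 1 ∈ A :=
    (mem_or (by lia) (by nlinarith)).resolve_right fun h ↦ hB h one_mem Q1S1_mem (by ring)
  have S_mem : S ∈ B :=
    (mem_or (by lia) (by nlinarith)).resolve_left fun h ↦ hA Q1_mem h QS_Q1_mem (by ring)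
  have SS1_mem : S * S + 1 ∈ A :=
    (mem_or (by lia) (by nlinarith)).resolve_right fun h ↦ hB one_mem S_mem h (by ring)
  have SS1_twoQ_mem : S * S + 1 + 2 * Q ∈ B :=
    (mem_or (by lia) (by nlinarith)).resolve_left fun h ↦ hA SS1_mem two_mem h (by ring)
  have t_mem : t ∈ A :=
    (mem_or (by lia) (by nlinarith)).resolve_right fun h ↦
      hB S1_twoQ_mem h SS1_twoQ_mem (by rw [hSt]; ring)
  exact hA twoQ1_mem t_mem QS_Q1_mem (by rw [hSt]; ring)

theorem not_Icc_subset_union_of_addMulFree (hS : 2 ≤ S) (hSQ : S ≤ Q)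
    (hA : AddMulFree Q A) (hB : AddMulFree S B) :
    ¬ Icc 1 ((Q + 1) * (S + 1) + S) ⊆ A ∪ B := by
  intro hcover
  rcases hcover ⟨le_rfl, by nlinarith⟩ with h | h
  · exact one_notMem_left_of_Icc_subset_union (by lia) hSQ hA hB hcover h
  · exact one_notMem_right_of_Icc_subset_union hS hSQ hA hB hcover h

end Forcing

section Equation

variable {ι : Type*} [Fintype ι] {a y : ι → ℕ} {A B : Set ℕ}

theorem AddSumMulFree.mono (hB : AddSumMulFree a B) (hAB : A ⊆ B) : AddSumMulFree a A :=
  fun _ _ _ hx hy hz ↦ hB (hAB hx) (fun i ↦ hAB (hy i)) (hAB hz)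

theorem AddSumMulFree.addMulFree_sum (hA : AddSumMulFree a A) : AddMulFree (∑ i, a i) A := by
  intro x y z hx hy hz
  rw [Finset.sum_mul]
  exact hA hx (fun _ ↦ hy) hz

theorem sum_add_le_sum_mul_add_one (hy : ∀ i, 1 ≤ y i) {j : ι} (haj : 0 < a j) :
    ∑ i, a i + y j ≤ ∑ i, a i * y i + 1 := by
  classical
  have rest_le : ∑ i ∈ Finset.univ.erase j, a i ≤ ∑ i ∈ Finset.univ.erase j, a i * y i :=
    Finset.sum_le_sum fun i _ ↦ Nat.le_mul_of_pos_right _ (hy i)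
  have term_le : a j + y j ≤ a j * y j + 1 := by nlinarith [hy j]
  rw [← Finset.add_sum_erase _ a (Finset.mem_univ j),
    ← Finset.add_sum_erase _ (fun i ↦ a i * y i) (Finset.mem_univ j)]
  lia

theorem addSumMulFree_Ico (a : ι → ℕ) (m : ℕ) :
    AddSumMulFree a (Ico m ((∑ i, a i + 1) * m)) := by
  rintro x y z ⟨hx, -⟩ hy ⟨-, hz⟩ rfl
  have sum_ge : (∑ i, a i) * m ≤ ∑ i, a i * y i := by
    rw [Finset.sum_mul]
    exact Finset.sum_le_sum fun i _ ↦ Nat.mul_le_mul_left _ (hy i).1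
  lia

theorem addSumMulFree_Icc_union_Ico {m M : ℕ} (hm : m ≤ ∑ i, a i)
    (hM : (∑ i, a i + 1) * m < M) :
    AddSumMulFree a (Icc 1 m ∪ Ico M (M + ∑ i, a i)) := by
  rintro x y z hx hy hz hxyz
  have one_le {n : ℕ} (hn : n ∈ Icc 1 m ∪ Ico M (M + ∑ i, a i)) : 1 ≤ n :=
    hn.elim And.left fun h ↦ by have := h.1; lia
  have x_pos : 1 ≤ x := one_le hx
  have sum_ge : ∑ i, a i ≤ ∑ i, a i * y i :=
    Finset.sum_le_sum fun i _ ↦ Nat.le_mul_of_pos_right _ (one_le (hy i))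
  have z_lt : z < M + ∑ i, a i := hz.elim (fun h ↦ by have := h.2; lia) And.right
  have x_le : x ≤ m := hx.elim And.right fun h ↦ by have := h.1; lia
  have term_le (i : ι) : a i * y i ≤ a i * m := by
    rcases (a i).eq_zero_or_pos with hai | hai
    · simp [hai]
    · have sum_add_le := sum_add_le_sum_mul_add_one (fun i ↦ one_le (hy i)) hai
      have y_le : y i ≤ m := (hy i).elim And.right fun h ↦ by have := h.1; lia
      exact Nat.mul_le_mul_left _ y_le
  have sum_le : ∑ i, a i * y i ≤ (∑ i, a i) * m := by
    rw [Finset.sum_mul]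
    exact Finset.sum_le_sum fun i _ ↦ term_le i
  rcases hz with ⟨-, hz⟩ | ⟨hz, -⟩ <;> lia

end Equation

section Coloring

variable {ι κ : Type*} [Fintype ι] [Fintype κ]

theorem not_addSumMulFree_colorClass_iff {α : Type*} {a : ι → ℕ} {χ : ℕ → α} {N : ℕ} {c : α} :
    ¬ AddSumMulFree a (colorClass χ N c) ↔
      ∃ (x : ℕ) (y : ι → ℕ) (z : ℕ),
        x ∈ Finset.Icc 1 N ∧ (∀ i, y i ∈ Finset.Icc 1 N) ∧ z ∈ Finset.Icc 1 N ∧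
        x + ∑ i, a i * y i = z ∧ χ x = c ∧ (∀ i, χ (y i) = c) ∧ χ z = c := by
  simp only [AddSumMulFree, colorClass, mem_ofPred_eq, forall_and]
  push Not
  exact exists₃_congr fun _ _ _ ↦ by tauto

theorem Icc_subset_colorClass_zero_union_one (χ : ℕ → Fin 2) (N : ℕ) :
    Icc 1 N ⊆ colorClass χ N 0 ∪ colorClass χ N 1 := by
  intro n hn
  rcases (by lia : χ n = 0 ∨ χ n = 1) with h | h
  · exact Or.inl ⟨Finset.mem_Icc.mpr hn, h⟩
  · exact Or.inr ⟨Finset.mem_Icc.mpr hn, h⟩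

theorem exists_coloring_addSumMulFree {a : ι → ℕ} {b : κ → ℕ} (hab : ∑ i, b i ≤ ∑ i, a i) {N : ℕ}
    (hN : N < (∑ i, a i + 1) * (∑ i, b i + 1) + ∑ i, b i) :
    ∃ χ : ℕ → Fin 2,
      AddSumMulFree a (colorClass χ N 0) ∧ AddSumMulFree b (colorClass χ N 1) := by
  set S := ∑ i, b i
  set M := (∑ i, a i + 1) * (S + 1) with hM
  refine ⟨fun n ↦ if n ∈ Ico (S + 1) M then 0 else 1, ?_, ?_⟩
  · refine (addSumMulFree_Ico a (S + 1)).mono fun n hn ↦ ?_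
    by_contra hn'
    exact one_ne_zero ((if_neg hn').symm.trans hn.2)
  · have hSM : (S + 1) * S < M := by rw [hM]; nlinarith
    refine (addSumMulFree_Icc_union_Ico le_rfl hSM).mono fun n ⟨hn, hχ⟩ ↦ ?_
    have hn' : n ∉ Ico (S + 1) M := fun h ↦ zero_ne_one ((if_pos h).symm.trans hχ)
    simp only [Finset.mem_Icc, mem_Ico, mem_union, mem_Icc] at hn hn' ⊢
    lia

end Coloring

/-- Corollary 3.2, case `∑ bᵢ ≥ 2`: the off-diagonal Rado number of
`x + a₁y₁ + ⋯ + a_k y_k = z` and `x + b₁y₁ + ⋯ + b_ℓ y_ℓ = z` is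
`(Q+1)(S+1) + S` where `Q = a₁ + ⋯ + a_k ≥ S = b₁ + ⋯ + b_ℓ ≥ 2`. -/
theorem off_diagonal_rado_corollary (k ℓ : ℕ) (hk : 1 ≤ k) (hl : 1 ≤ ℓ)
    (a : Fin k → ℕ) (b : Fin ℓ → ℕ)
    (ha : ∀ i, 0 < a i) (hb : ∀ i, 0 < b i)
    (hab : (∑ i, b i) ≤ ∑ i, a i) (hb2 : 2 ≤ ∑ i, b i) :
    IsLeast {N : ℕ | 0 < N ∧ ∀ χ : ℕ → Fin 2,
      (∃ (x : ℕ) (y : Fin k → ℕ) (z : ℕ),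
        x ∈ Finset.Icc 1 N ∧ (∀ i, y i ∈ Finset.Icc 1 N) ∧ z ∈ Finset.Icc 1 N ∧
        x + ∑ i, a i * y i = z ∧ χ x = 0 ∧ (∀ i, χ (y i) = 0) ∧ χ z = 0) ∨
      (∃ (x : ℕ) (y : Fin ℓ → ℕ) (z : ℕ),
        x ∈ Finset.Icc 1 N ∧ (∀ i, y i ∈ Finset.Icc 1 N) ∧ z ∈ Finset.Icc 1 N ∧
        x + ∑ i, b i * y i = z ∧ χ x = 1 ∧ (∀ i, χ (y i) = 1) ∧ χ z = 1)}
      (((∑ i, a i) + 1) * ((∑ i, b i) + 1) + ∑ i, b i) := by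
  simp only [← not_addSumMulFree_colorClass_iff]
  refine ⟨⟨by positivity, fun χ ↦ ?_⟩, fun N ⟨_, hN⟩ ↦ ?_⟩
  · by_contra! h
    exact not_Icc_subset_union_of_addMulFree hb2 hab h.1.addMulFree_sum h.2.addMulFree_sum
      (Icc_subset_colorClass_zero_union_one χ _)
  · by_contra! hlt
    obtain ⟨χ, hχa, hχb⟩ := exists_coloring_addSumMulFree hab hlt
    exact (hN χ).elim (· hχa) (· hχb)
end

section
/- For every positive integer q, the least positive integer N such that every 2-coloring χ of {1,…,N} admits x, y, z ∈ {1,…,N} with x + qy = z and χ(x) = χ(y) = χ(z) is N = q² + 3q + 1. -/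
/-!
Lower bound: an interval `[a, (q + 1) a)` contains no solution, since `x + q y ≥ (q + 1) a` for
`x, y ≥ a`. For `a ≤ q + 1` its complement stays free of solutions up to `(q + 1) a + q - 1`: two
elements below `a` give a value inside the interval, and anything else overshoots. Taking
`a = q + 1` colors `{1, …, q² + 3q}`.

Upper bound: in a coloring without monochromatic solutions, the color of `1` forces in turn the
colors of `q + 1`, `(q + 1)²`, `q² + 3q + 1` and `q + 2`. The last of these agrees with that of `1`,
so `2` and `2q + 2` both receive the other color, although `2 + q · 2 = 2q + 2`.
-/

/-- A set is solution-free for `x + q y = z` if it contains no solution of this equation. These are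
the sets that can be color classes of a coloring without monochromatic solutions. -/
def IsSolutionFree (q : ℕ) (S : Set ℕ) : Prop :=
  ∀ x ∈ S, ∀ y ∈ S, x + q * y ∉ S

/-- The coloring `χ`, restricted to `{1, …, N}`, admits a monochromatic solution of `x + q y = z`.
As only the values on `{1, …, N}` matter, a coloring is encoded as a function on all of `ℕ`. -/
def HasMonochromaticSolution (q N : ℕ) {κ : Type*} (χ : ℕ → κ) : Prop :=
  ∃ x y z : ℕ, x ∈ Finset.Icc 1 N ∧ y ∈ Finset.Icc 1 N ∧
    z ∈ Finset.Icc 1 N ∧ x + q * y = z ∧ χ x = χ y ∧ χ y = χ z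

theorem isSolutionFree_Ico (q a : ℕ) : IsSolutionFree q (Set.Ico a ((q + 1) * a)) := by
  rintro x ⟨hx, -⟩ y ⟨hy, -⟩ ⟨-, hz⟩
  have hle : (q + 1) * a ≤ x + q * y := calc
    (q + 1) * a = a + q * a := by ring
    _ ≤ x + q * y := by gcongr
  exact hz.not_ge hle

theorem isSolutionFree_Ico_union_Ico {q a : ℕ} (ha : 1 ≤ a) (haq : a ≤ q + 1) :
    IsSolutionFree q (Set.Ico 1 a ∪ Set.Ico ((q + 1) * a) ((q + 1) * a + q)) := by
  have hpos : ∀ n ∈ Set.Ico 1 a ∪ Set.Ico ((q + 1) * a) ((q + 1) * a + q), 1 ≤ n := by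
    rintro n (hn | hn)
    · exact hn.1
    · exact (Nat.mul_pos q.succ_pos ha).trans_le hn.1
  intro x hx y hy hz
  have hx_pos := hpos x hx
  have hy_pos := hpos y hy
  have hqy : q ≤ q * y := Nat.le_mul_of_pos_right q hy_pos
  obtain ⟨hz_ge, hz_lt⟩ := hz.resolve_left fun hz => absurd hz.2 (by omega)
  obtain ⟨-, hx_lt⟩ := hx.resolve_right fun hx => absurd hx.1 (by omega)
  rcases hy with hy | hy
  · have : x + q * y < (q + 1) * a := calc
      x + q * y < a + q * a := add_lt_add_of_lt_of_le hx_lt (by gcongr; exact hy.2.le)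
      _ = (q + 1) * a := by ring
    exact this.not_ge hz_ge
  · have hq : 0 < q := Nat.pos_of_lt_add_right (hy.1.trans_lt hy.2)
    obtain ⟨p, rfl⟩ := Nat.exists_eq_add_one.mpr hq
    have : (p + 1 + 1) * a + (p + 1) ≤ x + (p + 1) * y := calc
      (p + 1 + 1) * a + (p + 1) ≤ y + (p * y + x) := by
        gcongr
        · exact hy.1
        · exact Nat.le_mul_of_pos_right p hy_pos
      _ = x + (p + 1) * y := by ring
    exact this.not_gt hz_lt

theorem exists_not_hasMonochromaticSolution_of_cover {q N : ℕ} {A B : Set ℕ}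
    (hA : IsSolutionFree q A) (hB : IsSolutionFree q B) (hcover : Set.Icc 1 N ⊆ A ∪ B) :
    ∃ χ : ℕ → Fin 2, ¬ HasMonochromaticSolution q N χ := by
  classical
  refine ⟨fun n => if n ∈ A then 1 else 0, ?_⟩
  rintro ⟨x, y, _, hx, hy, hz, rfl, hxy, hyz⟩
  have mem_B : ∀ n ∈ Finset.Icc 1 N, n ∉ A → n ∈ B := fun n hn hnA =>
    (hcover (Finset.mem_Icc.mp hn)).resolve_left hnA
  have hxy_iff : x ∈ A ↔ y ∈ A := by grind
  have hyz_iff : y ∈ A ↔ x + q * y ∈ A := by grind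
  by_cases hyA : y ∈ A
  · exact hA x (hxy_iff.mpr hyA) y hyA (hyz_iff.mp hyA)
  · exact hB x (mem_B x hx (hxy_iff.not.mpr hyA)) y (mem_B y hy hyA)
      (mem_B _ hz (hyz_iff.not.mp hyA))

theorem exists_not_hasMonochromaticSolution_of_lt {q N : ℕ} (hN : N < q ^ 2 + 3 * q + 1) :
    ∃ χ : ℕ → Fin 2, ¬ HasMonochromaticSolution q N χ := by
  refine exists_not_hasMonochromaticSolution_of_cover (isSolutionFree_Ico q (q + 1))
    (isSolutionFree_Ico_union_Ico (a := q + 1) (by omega) le_rfl) ?_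
  have hend : (q + 1) * (q + 1) + q = q ^ 2 + 3 * q + 1 := by ring
  rintro n ⟨hn_pos, hn_le⟩
  simp only [Set.mem_union, Set.mem_Ico]
  omega

theorem ne_of_not_hasMonochromaticSolution {q N : ℕ} {κ : Type*} {χ : ℕ → κ} (hq : 0 < q)
    (hχ : ¬ HasMonochromaticSolution q N χ) {x y z : ℕ} (hx : 1 ≤ x) (hy : 1 ≤ y)
    (hz : z ≤ N) (hsol : x + q * y = z) (hxy : χ x = χ y) : χ z ≠ χ y := by
  intro hzy
  have hy_le : y ≤ q * y := Nat.le_mul_of_pos_left y hq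
  refine hχ ⟨x, y, z, ?_, ?_, ?_, hsol, hxy, hzy.symm⟩ <;> rw [Finset.mem_Icc] <;> omega

theorem fin_two_eq_of_ne_of_ne {a b c : Fin 2} (hac : a ≠ c) (hbc : b ≠ c) : a = b := by
  omega

theorem hasMonochromaticSolution_sq_add_three_mul_add_one {q : ℕ} (hq : 0 < q) (χ : ℕ → Fin 2) :
    HasMonochromaticSolution q (q ^ 2 + 3 * q + 1) χ := by
  by_contra hχ
  have hq_sq : 0 < q ^ 2 := by positivity
  have color_ne {x y z : ℕ} (hx : 1 ≤ x) (hy : 1 ≤ y) (hz : z ≤ q ^ 2 + 3 * q + 1)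
      (hsol : x + q * y = z) (hxy : χ x = χ y) : χ z ≠ χ y :=
    ne_of_not_hasMonochromaticSolution hq hχ hx hy hz hsol hxy
  have h_q_add_one : χ (q + 1) ≠ χ 1 :=
    color_ne le_rfl le_rfl (by omega) (by ring) rfl
  have h_sq : χ (q ^ 2 + 2 * q + 1) = χ 1 :=
    fin_two_eq_of_ne_of_ne
      (color_ne (x := q + 1) (y := q + 1) (by omega) (by omega) (by omega) (by ring) rfl)
      h_q_add_one.symm
  have h_last : χ (q ^ 2 + 3 * q + 1) ≠ χ 1 :=
    color_ne (by omega) le_rfl le_rfl (by ring) h_sq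
  have h_q_add_two : χ (q + 2) = χ 1 := by
    by_contra hne
    exact color_ne (x := q + 1) (y := q + 2) (by omega) (by omega) le_rfl (by ring)
      (fin_two_eq_of_ne_of_ne h_q_add_one hne) (fin_two_eq_of_ne_of_ne h_last hne)
  have h_two : χ 2 ≠ χ 1 := fun h =>
    color_ne (by omega) le_rfl (by omega) (by ring) h h_q_add_two
  have h_two_mul : χ (2 * q + 2) ≠ χ 1 :=
    color_ne (by omega) le_rfl (by omega) (by ring) h_q_add_two
  exact color_ne (x := 2) (y := 2) (by omega) (by omega) (by omega) (by ring) rfl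
    (fin_two_eq_of_ne_of_ne h_two_mul h_two)

/-- Theorem 3.3 (Jones and Schaal): the 2-color Rado number of
`x + qy = z` is `q² + 3q + 1`. -/
theorem rado_number_x_add_qy (q : ℕ) (hq : 0 < q) :
    IsLeast {N : ℕ | 0 < N ∧ ∀ χ : ℕ → Fin 2,
      ∃ x y z : ℕ, x ∈ Finset.Icc 1 N ∧ y ∈ Finset.Icc 1 N ∧
        z ∈ Finset.Icc 1 N ∧ x + q * y = z ∧ χ x = χ y ∧ χ y = χ z}
      (q ^ 2 + 3 * q + 1) := by
  refine ⟨⟨by positivity, hasMonochromaticSolution_sq_add_three_mul_add_one hq⟩, ?_⟩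
  rintro N ⟨-, hN⟩
  by_contra! hlt
  obtain ⟨χ, hχ⟩ := exists_not_hasMonochromaticSolution_of_lt hlt
  exact hχ (hN χ)
end

section
/- RR_3(7,3) = 192. That is, 192 is the least positive integer N such that every 2-coloring χ of {1,…,N} admits x, y, z ∈ {1,…,N} with 3x + 7y = z and χ(x) = χ(y) = χ(z) = 0, or x, y, z ∈ {1,…,N} with 3x + 3y = z and χ(x) = χ(y) = χ(z) = 1. -/
/-!
A 2-coloring is encoded by the set `A` of numbers of color 1.

Lower bound: take `A = {3, …, 17} ∪ {20} ∪ {n ≥ 61 : 3 ∤ n} ∪ {n ≥ 121}`. If `x, y ∉ A` and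
`z = 3x + 7y ≤ 120`, then `y ∈ {1, 2}`, so `z` is one of 10, 13, 17, 20 or is at least 61 and not
divisible by 3; in all cases `z ∈ A`. If `x, y ∈ A` and `z = 3x + 3y ≤ 191`, then `x, y ≤ 20`, so
`z` is a multiple of 3 between 18 and 120, and none of these lies in `A`.

Upper bound: if there is no forbidden solution, then `1` and `(t + s)(t + q)` have the same color
and `t + s` has the other one: if `1 ∈ A` then `t + s ∉ A`, hence `(t + s)(t + q) ∈ A`, and the case
`1 ∉ A` is symmetric via `t + q`. For `(t, q, s) = (3, 7, 3)` this fixes the colors of 6 and 60 in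
terms of that of 1, and following the forced colors from there leads to a contradiction either way.
-/

/-- `A` contains no solution of `t * x + q * y = z` in positive integers with `z ≤ N`. When `t` and
`q` are positive this is the absence of solutions in `A ∩ {1, …, N}`. -/
def SolutionFree (t q N : ℕ) (A : Set ℕ) : Prop :=
  ∀ ⦃x y : ℕ⦄, 0 < x → 0 < y → t * x + q * y ≤ N → x ∈ A → y ∈ A → t * x + q * y ∉ A

/-- The 2-coloring of `{1, …, N}` whose color class 1 is `A` has no solution of `t * x + q * y = z`
in color 0 and no solution of `t * x + s * y = z` in color 1. -/
structure IsSplitting (t q s N : ℕ) (A : Set ℕ) : Prop where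
  compl : SolutionFree t q N Aᶜ
  self : SolutionFree t s N A

theorem SolutionFree.mono {t q M N : ℕ} {A : Set ℕ} (hA : SolutionFree t q N A) (hMN : M ≤ N) :
    SolutionFree t q M A :=
  fun _ _ hx hy hM => hA hx hy (hM.trans hMN)

theorem exists_monochromatic_iff_not_solutionFree {α : Type*} {t q : ℕ} (ht : 0 < t) (hq : 0 < q)
    (N : ℕ) (χ : ℕ → α) (c : α) :
    (∃ x y z : ℕ, x ∈ Finset.Icc 1 N ∧ y ∈ Finset.Icc 1 N ∧ z ∈ Finset.Icc 1 N ∧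
      t * x + q * y = z ∧ χ x = c ∧ χ y = c ∧ χ z = c) ↔ ¬ SolutionFree t q N (χ ⁻¹' {c}) := by
  simp only [Finset.mem_Icc, SolutionFree, not_forall, not_not]
  constructor
  · rintro ⟨x, y, _, hx, hy, hz, rfl, hχx, hχy, hχz⟩
    exact ⟨x, y, hx.1, hy.1, hz.2, hχx, hχy, hχz⟩
  · rintro ⟨x, y, hx, hy, hN, hχx, hχy, hχz⟩
    have hxt : x ≤ t * x := Nat.le_mul_of_pos_left x ht
    have hyq : y ≤ q * y := Nat.le_mul_of_pos_left y hq
    exact ⟨x, y, _, ⟨hx, by omega⟩, ⟨hy, by omega⟩, ⟨by omega, hN⟩, rfl, hχx, hχy, hχz⟩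

theorem forall_coloring_exists_monochromatic_iff {t q s N : ℕ}
    (ht : 0 < t) (hq : 0 < q) (hs : 0 < s) :
    (∀ χ : ℕ → Fin 2,
      (∃ x y z : ℕ, x ∈ Finset.Icc 1 N ∧ y ∈ Finset.Icc 1 N ∧ z ∈ Finset.Icc 1 N ∧
        t * x + q * y = z ∧ χ x = 0 ∧ χ y = 0 ∧ χ z = 0) ∨
      (∃ x y z : ℕ, x ∈ Finset.Icc 1 N ∧ y ∈ Finset.Icc 1 N ∧ z ∈ Finset.Icc 1 N ∧
        t * x + s * y = z ∧ χ x = 1 ∧ χ y = 1 ∧ χ z = 1)) ↔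
      ∀ A : Set ℕ, ¬ IsSplitting t q s N A := by
  classical
  simp only [exists_monochromatic_iff_not_solutionFree ht hq,
    exists_monochromatic_iff_not_solutionFree ht hs, ← not_and_or]
  constructor
  · intro h A hA
    let χ : ℕ → Fin 2 := fun n => if n ∈ A then 1 else 0
    have class_zero : χ ⁻¹' {0} = Aᶜ := by ext n; simp [χ]
    have class_one : χ ⁻¹' {1} = A := by ext n; simp [χ]
    exact h χ ⟨class_zero ▸ hA.compl, class_one.symm ▸ hA.self⟩
  · rintro h χ ⟨h_zero, h_one⟩
    have class_zero : χ ⁻¹' {0} = (χ ⁻¹' {1})ᶜ := by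
      ext n
      simp only [Set.mem_preimage, Set.mem_singleton_iff, Set.mem_compl_iff]
      omega
    exact h _ ⟨class_zero ▸ h_zero, h_one⟩

namespace IsSplitting

section General

variable {t q s M N : ℕ} {A : Set ℕ}

theorem mono (hA : IsSplitting t q s N A) (hMN : M ≤ N) : IsSplitting t q s M A :=
  ⟨hA.compl.mono hMN, hA.self.mono hMN⟩

theorem mem_of_notMem (hA : IsSplitting t q s N A) {x y z : ℕ} (hxA : x ∉ A) (hyA : y ∉ A)
    (hz : t * x + q * y = z := by norm_num) (hzN : z ≤ N := by omega)
    (hx : 0 < x := by omega) (hy : 0 < y := by omega) : z ∈ A :=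
  hz ▸ not_not.mp (hA.compl hx hy (hz.trans_le hzN) hxA hyA)

theorem notMem_of_mem (hA : IsSplitting t q s N A) {x y z : ℕ} (hxA : x ∈ A) (hyA : y ∈ A)
    (hz : t * x + s * y = z := by norm_num) (hzN : z ≤ N := by omega)
    (hx : 0 < x := by omega) (hy : 0 < y := by omega) : z ∉ A :=
  hz ▸ hA.self hx hy (hz.trans_le hzN) hxA hyA

theorem mul_mem_iff (hA : IsSplitting t q s N A) (ht : 0 < t) (hN : (t + s) * (t + q) ≤ N) :
    (t + s) * (t + q) ∈ A ↔ 1 ∈ A := by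
  have hsN : t + s ≤ N := (Nat.le_mul_of_pos_right _ (by omega)).trans hN
  have hqN : t + q ≤ N := (Nat.le_mul_of_pos_left _ (by omega)).trans hN
  constructor
  · intro hmul
    by_contra h1
    have hq : t + q ∈ A := hA.mem_of_notMem h1 h1
    exact absurd hmul (hA.notMem_of_mem hq hq (by ring))
  · intro h1
    have hs : t + s ∉ A := hA.notMem_of_mem h1 h1
    exact hA.mem_of_notMem hs hs (by ring)

theorem add_mem_iff (hA : IsSplitting t q s N A) (ht : 0 < t) (hN : (t + s) * (t + q) ≤ N) :
    t + s ∈ A ↔ 1 ∉ A := by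
  have hsN : t + s ≤ N := (Nat.le_mul_of_pos_right _ (by omega)).trans hN
  constructor
  · intro hs h1
    exact absurd hs (hA.notMem_of_mem h1 h1)
  · intro h1
    by_contra hs
    have hmul : (t + s) * (t + q) ∈ A := hA.mem_of_notMem hs hs (by ring)
    exact h1 ((hA.mul_mem_iff ht hN).mp hmul)

end General

section ThreeSevenThree

variable {N : ℕ} {A : Set ℕ}

theorem one_notMem (hA : IsSplitting 3 7 3 N A) (hN : 183 ≤ N) : 1 ∉ A := by
  intro h1
  have h6 : 6 ∉ A := fun h => (hA.add_mem_iff three_pos (by omega)).mp h h1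
  have h60 : 60 ∈ A := (hA.mul_mem_iff three_pos (by omega)).mpr h1
  have h19 : 19 ∉ A := fun h => absurd h60 (hA.notMem_of_mem h1 h)
  have h183 : 183 ∉ A := hA.notMem_of_mem h1 h60
  have h18 : 18 ∈ A := by
    by_contra h
    exact h183 (hA.mem_of_notMem h19 h)
  have h99 : 99 ∈ A := hA.mem_of_notMem h19 h6
  have h32 : 32 ∉ A := fun h => absurd h99 (hA.notMem_of_mem h1 h)
  have h2 : 2 ∈ A := by
    by_contra h
    exact h32 (hA.mem_of_notMem h6 h)
  exact absurd h60 (hA.notMem_of_mem h2 h18)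

theorem three_mem_of_one_notMem (hA : IsSplitting 3 7 3 N A) (hN : 60 ≤ N) (h1 : 1 ∉ A) :
    3 ∈ A := by
  by_contra h3
  have h6 : 6 ∈ A := (hA.add_mem_iff three_pos (by omega)).mpr h1
  have h36 : 36 ∉ A := hA.notMem_of_mem h6 h6
  have h30 : 30 ∈ A := hA.mem_of_notMem h3 h3
  have h5 : 5 ∉ A := fun h => absurd h30 (hA.notMem_of_mem h h)
  exact h36 (hA.mem_of_notMem h5 h3)

end ThreeSevenThree

end IsSplitting

theorem not_isSplitting_of_le {N : ℕ} (hN : 192 ≤ N) (A : Set ℕ) : ¬ IsSplitting 3 7 3 N A := by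
  intro hA
  have h1 : 1 ∉ A := hA.one_notMem (by omega)
  have h3 : 3 ∈ A := hA.three_mem_of_one_notMem (by omega) h1
  have h6 : 6 ∈ A := (hA.add_mem_iff three_pos (by omega)).mpr h1
  have h18 : 18 ∉ A := hA.notMem_of_mem h3 h3
  have h61 : 61 ∈ A := hA.mem_of_notMem h18 h1
  have h27 : 27 ∉ A := hA.notMem_of_mem h3 h6
  have h192 : 192 ∈ A := hA.mem_of_notMem h1 h27
  exact absurd h192 (hA.notMem_of_mem h3 h61)

/-- Color class 1 of a 2-coloring that has no forbidden solution up to `191`. -/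
def extremalClass : Set ℕ :=
  {n | 3 ≤ n ∧ n ≤ 17 ∨ n = 20 ∨ 61 ≤ n ∧ ¬ 3 ∣ n ∨ 121 ≤ n}

theorem solutionFree_compl_extremalClass (N : ℕ) : SolutionFree 3 7 N extremalClassᶜ := by
  intro x y hx hy _ hxA hyA hzA
  simp only [extremalClass, Set.mem_compl_iff, Set.mem_ofPred_eq] at hxA hyA hzA
  have hy_small : y = 1 ∨ y = 2 := by omega
  omega

theorem solutionFree_extremalClass : SolutionFree 3 3 191 extremalClass := by
  intro x y _ _ hN hxA hyA hzA
  simp only [extremalClass, Set.mem_ofPred_eq] at hxA hyA hzA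
  have hx_small : x ≤ 20 := by omega
  have hy_small : y ≤ 20 := by omega
  omega

theorem isSplitting_extremalClass : IsSplitting 3 7 3 191 extremalClass :=
  ⟨solutionFree_compl_extremalClass 191, solutionFree_extremalClass⟩

/-- `RR_3(7,3) = 192`: the least positive `N` such that every 2-coloring of
`{1,…,N}` admits a solution to `3x + 7y = z` monochromatic of color 0 or a
solution to `3x + 3y = z` monochromatic of color 1 is `192`. -/
theorem RR_3_7_3 :
    IsLeast {N : ℕ | 0 < N ∧ ∀ χ : ℕ → Fin 2,
      (∃ x y z : ℕ, x ∈ Finset.Icc 1 N ∧ y ∈ Finset.Icc 1 N ∧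
        z ∈ Finset.Icc 1 N ∧ 3 * x + 7 * y = z ∧ χ x = 0 ∧ χ y = 0 ∧ χ z = 0) ∨
      (∃ x y z : ℕ, x ∈ Finset.Icc 1 N ∧ y ∈ Finset.Icc 1 N ∧
        z ∈ Finset.Icc 1 N ∧ 3 * x + 3 * y = z ∧ χ x = 1 ∧ χ y = 1 ∧ χ z = 1)}
      192 := by
  simp only [forall_coloring_exists_monochromatic_iff three_pos (by norm_num : 0 < 7) three_pos]
  refine ⟨⟨by norm_num, not_isSplitting_of_le le_rfl⟩, ?_⟩
  rintro N ⟨-, hN⟩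
  by_contra hlt
  exact hN extremalClass (isSplitting_extremalClass.mono (by omega))
end
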